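/- Let T > 0 and let f : ℝ → ℂ be infinitely differentiable and periodic with period T, with Fourier coefficients c_k = (1/T)∫₀^T f(t)·exp(−2πikt/T) dt for k ∈ ℤ. Then the family k ↦ (1 + |k|)·‖c_k‖² is summable over k ∈ ℤ. -/

import Mathlib

/-!
Integration by parts over `[a, b]` turns `c_k(f')` into `(2πik / (b - a)) c_k(f)`, the boundary
terms cancelling because `f a = f b`. Parseval's identity for `f` and for `f'` therefore gives
`∑ (1 + k²) ‖c_k(f)‖² < ∞`, and `|k| ≤ k²` for integers.
-/

open MeasureTheory Set
open scoped ENNReal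

theorem memLp_restrict_of_continuousOn_of_subset_isCompact {X E : Type*} [TopologicalSpace X]
    [MeasurableSpace X] [OpensMeasurableSpace X] [NormedAddCommGroup E] {μ : Measure X}
    [IsFiniteMeasureOnCompacts μ] {f : X → E} {s K : Set X} (hf : ContinuousOn f K)
    (hK : IsCompact K) (hKm : MeasurableSet K) (hsK : s ⊆ K) (p : ℝ≥0∞) :
    MemLp f p (μ.restrict s) := by
  have : IsFiniteMeasure (μ.restrict K) := ⟨by simpa using hK.measure_lt_top⟩
  obtain ⟨C, hC⟩ := hK.exists_bound_of_continuousOn hf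
  have hfK : MemLp f p (μ.restrict K) := .of_bound (hf.aestronglyMeasurable_of_isCompact hK hKm) C
    ((ae_restrict_iff' hKm).2 (.of_forall hC))
  exact hfK.mono_measure (Measure.restrict_mono_set μ hsK)

section FourierCoeffOn

variable {a b : ℝ} {f f' : ℝ → ℂ}

theorem fourierCoeffOn_eq_integral_mul_exp (hab : a < b) (f : ℝ → ℂ) (k : ℤ) :
    fourierCoeffOn hab f k = 1 / ((b - a : ℝ) : ℂ) * ∫ t in a..b,
      f t * Complex.exp (-(2 * (Real.pi : ℂ) * Complex.I * k * t) / ((b - a : ℝ) : ℂ)) := by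
  rw [fourierCoeffOn_eq_integral, Complex.real_smul, Complex.ofReal_div, Complex.ofReal_one]
  congr 2 with t
  rw [fourier_coe_apply, smul_eq_mul, mul_comm]
  congr 3
  push_cast
  ring

theorem fourierCoeffOn_zero_eq_integral {E : Type*} [NormedAddCommGroup E] [NormedSpace ℂ E]
    (hab : a < b) (f : ℝ → E) :
    fourierCoeffOn hab f 0 = (1 / (b - a)) • ∫ t in a..b, f t := by
  simp only [fourierCoeffOn_eq_integral, neg_zero, fourier_zero, one_smul]

theorem fourierCoeffOn_deriv_right_eq_mul_of_eq_endpoints (hab : a < b)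
    (hf : ContinuousOn f (Icc a b))
    (hff' : ∀ x ∈ Ioo a b, HasDerivWithinAt f (f' x) (Ioi x) x)
    (hf' : IntervalIntegrable f' volume a b) (hfab : f a = f b) (k : ℤ) :
    fourierCoeffOn hab f' k =
      2 * Real.pi * Complex.I * k / (b - a : ℝ) * fourierCoeffOn hab f k := by
  rcases eq_or_ne k 0 with rfl | hk
  · rw [fourierCoeffOn_zero_eq_integral,
      intervalIntegral.integral_eq_sub_of_hasDeriv_right_of_le hab.le hf hff' hf', hfab]
    simp only [sub_self, smul_zero, Int.cast_zero, mul_zero, zero_div, zero_mul]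
  · have hba : (b : ℂ) - a ≠ 0 := by exact_mod_cast (sub_pos.2 hab).ne'
    have hk' : (k : ℂ) ≠ 0 := by exact_mod_cast hk
    have hpi : (Real.pi : ℂ) ≠ 0 := by exact_mod_cast Real.pi_ne_zero
    rw [fourierCoeffOn_of_hasDeriv_right (f := f) hab hk (by rwa [uIcc_of_le hab.le])
      (by rwa [min_eq_left hab.le, max_eq_right hab.le]) hf', hfab]
    push_cast
    field_simp [Complex.I_ne_zero]
    ring

theorem summable_one_add_sq_mul_norm_fourierCoeffOn_sq (hab : a < b)
    (hf : ContinuousOn f (Icc a b))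
    (hff' : ∀ x ∈ Ioo a b, HasDerivWithinAt f (f' x) (Ioi x) x)
    (hf' : MemLp f' 2 (volume.restrict (Ioc a b))) (hfab : f a = f b) :
    Summable fun k : ℤ => (1 + (k : ℝ) ^ 2) * ‖fourierCoeffOn hab f k‖ ^ 2 := by
  have hfL2 : MemLp f 2 (volume.restrict (Ioc a b)) :=
    memLp_restrict_of_continuousOn_of_subset_isCompact hf isCompact_Icc measurableSet_Icc
      Ioc_subset_Icc_self 2
  have hf'int : IntervalIntegrable f' volume a b :=
    (intervalIntegrable_iff_integrableOn_Ioc_of_le hab.le).2 (hf'.integrable one_le_two)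
  have hcoeff (k : ℤ) : (k : ℝ) ^ 2 * ‖fourierCoeffOn hab f k‖ ^ 2 =
      ((b - a) / (2 * Real.pi)) ^ 2 * ‖fourierCoeffOn hab f' k‖ ^ 2 := by
    have hba : b - a ≠ 0 := (sub_pos.2 hab).ne'
    rw [fourierCoeffOn_deriv_right_eq_mul_of_eq_endpoints hab hf hff' hf'int hfab k]
    simp only [norm_mul, norm_div, Complex.norm_ofNat, Complex.norm_I, Complex.norm_real,
      Complex.norm_intCast, Real.norm_eq_abs, mul_pow, div_pow, sq_abs, mul_one]
    field_simp
  simp only [add_mul, one_mul, hcoeff]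
  exact (hasSum_sq_fourierCoeffOn hab hfL2).summable.add
    ((hasSum_sq_fourierCoeffOn hab hf').summable.mul_left _)

theorem fourierCoeff_summable_hilbertSchmidt_general (hab : a < b)
    (hf : ContinuousOn f (Icc a b))
    (hff' : ∀ x ∈ Ioo a b, HasDerivWithinAt f (f' x) (Ioi x) x)
    (hf' : MemLp f' 2 (volume.restrict (Ioc a b))) (hfab : f a = f b) :
    Summable fun k : ℤ => (1 + |(k : ℝ)|) * ‖fourierCoeffOn hab f k‖ ^ 2 := by
  refine .of_nonneg_of_le (fun k => by positivity) (fun k => ?_)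
    (summable_one_add_sq_mul_norm_fourierCoeffOn_sq hab hf hff' hf' hfab)
  have habs_le_sq : |(k : ℝ)| ≤ (k : ℝ) ^ 2 := by
    exact_mod_cast Int.natCast_natAbs k ▸ Int.natAbs_le_self_sq k
  gcongr

end FourierCoeffOn

/-- For a smooth `T`-periodic function `f : ℝ → ℂ` with Fourier coefficients
`c_k = (1/T) ∫₀ᵀ f(t) exp(-2πikt/T) dt`, the family `k ↦ (1 + |k|)·‖c_k‖²` is summable
over `k ∈ ℤ`. -/
theorem fourierCoeff_summable_hilbertSchmidt (T : ℝ) (hT : 0 < T) (f : ℝ → ℂ)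
    (hf : ContDiff ℝ (⊤ : ℕ∞) f) (hper : Function.Periodic f T) :
    Summable (fun k : ℤ =>
      (1 + (|k| : ℝ)) *
        ‖(1 / (T : ℂ)) * ∫ t in (0 : ℝ)..T,
            f t * Complex.exp (-(2 * (Real.pi : ℂ) * Complex.I * (k : ℂ) * (t : ℂ)) / (T : ℂ))‖ ^ 2) := by
  have hdf : Differentiable ℝ f := hf.differentiable (by simp)
  have hderivL2 : MemLp (deriv f) 2 (volume.restrict (Ioc 0 T)) :=
    memLp_restrict_of_continuousOn_of_subset_isCompact
      (hf.continuous_deriv (by simp)).continuousOn isCompact_Icc measurableSet_Icc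
      Ioc_subset_Icc_self 2
  simpa only [fourierCoeffOn_eq_integral_mul_exp, sub_zero] using
    fourierCoeff_summable_hilbertSchmidt_general hT hf.continuous.continuousOn
      (fun x _ => (hdf x).hasDerivAt.hasDerivWithinAt) hderivL2 (by simpa using (hper 0).symm)
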